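/- arXiv:1710.10484 — 2 statements merged into one kernel-verified Lean document; each statement's English description precedes it below -/
import Mathlib

section
/- Let α ∈ [0,1) and let G be a graph of order n with diameter at least k, where k ≥ 2. Then ρ_α(G) ≤ ρ_α(B_{n−k+2,⌊k/2⌋,⌈k/2⌉}), with equality holding if and only if G is isomorphic to B_{n−k+2,⌊k/2⌋,⌈k/2⌉}. -/
/-!
Let `d` be the distance from one end of a diametral path of `G`. Adjacent vertices have values of
`d` differing by at most one, so `G` is a spanning subgraph of the *layered graph* of
`L = min d k`, in which distinct vertices are adjacent iff their labels differ by at most one, and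
`L` takes all the values `0, …, k`. By Perron-Frobenius the index grows strictly under adding
edges to a connected graph (`rhoAlpha_mono`), so it suffices to maximize the index over the
finitely many layerings and to show that every maximizer yields the bug graph.

Let `L` be a maximizer with Perron vector `x > 0`. Any test vector on any other layering has
Rayleigh quotient at most the optimum, and in case of a tie it is an eigenvector there
(`IsOptimal.compare`). Three modifications use this.

* *Cloning.* If two different layers have at least two vertices each, take `w` and `w'` in them
  and replace `w'` by a twin of `w` with the same value, or vice versa. The two energy gains add
  up to `2 (x w² + x w'²)`, minus twice the contribution of the edge `w w'` if present, which is
  nonnegative; a tie is excluded by the eigenvector equations. So only one layer `i` is large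
  (`IsOptimal.no_two_fat`).
* *Shifting.* Suppose `2 i + 2 ≤ k`, and write `X j` for the value on the singleton layer `j`. If
  `i = 0` or `X (i-1) < X (i+2)`, moving one vertex from layer `i` to layer `i + 1` gains energy
  (`IsOptimal.no_shift`).
* *Partial reflection.* Otherwise let `s` be the least index with `X (2i+1-s) ≤ X s`; then
  `s ≤ i - 1`. Reflecting the labels in `[s, 2i+1-s]` about `i + 1/2` changes the graph only by a
  switch at the two ends of this interval, and minimality of `s` makes the gain nonnegative, with
  a tie excluded by an eigenvector equation (`IsOptimal.no_refl`).

Hence `k ≤ 2 i + 1`, and by reversing the labels `2 i ≤ k + 1`. So up to reversal `i = k / 2`, and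
the layered graph is the bug graph (`IsOptimal.iso_bug`).
-/

/-- The spectral radius (largest eigenvalue) of a real symmetric matrix, as the
supremum of its set of real eigenvalues. -/
noncomputable def specRad {n : Type*} [Fintype n] (M : Matrix n n ℝ) : ℝ :=
  sSup {t : ℝ | ∃ v : n → ℝ, v ≠ 0 ∧ M.mulVec v = t • v}

/-- The matrix `A_α(G) = α·D(G) + (1-α)·A(G)`. -/
noncomputable def Aalpha {V : Type*} [Fintype V] [DecidableEq V]
    (α : ℝ) (G : SimpleGraph V) : Matrix V V ℝ :=
  letI := Classical.decRel G.Adj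
  α • Matrix.diagonal (fun v => (G.degree v : ℝ)) + (1 - α) • G.adjMatrix ℝ

/-- The `α`-index `ρ_α(G)`: the spectral radius of `A_α(G)`. -/
noncomputable def rhoAlpha {V : Type*} [Fintype V] [DecidableEq V]
    (α : ℝ) (G : SimpleGraph V) : ℝ :=
  specRad (Aalpha α G)

/-- The bug graph `B_{p,q,r}`: the complete graph `K_p` minus an edge `{u,v}`, with a
path on `q` vertices attached at `u` and a path on `r` vertices attached at `v`
(attaching means identifying one end of the path with the root, so `B_{p,q,r}` has
`p+q+r-2` vertices). Vertices `0,…,q-1` form the first path (with `u = q-1`),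
vertices `q-1,…,q+p-2` form the clique with the edge `{q-1, q+p-2}` removed, and
vertices `q+p-2,…,p+q+r-3` form the second path (with `v = q+p-2`). -/
def bugGraph (p q r : ℕ) : SimpleGraph (Fin (p + q + r - 2)) :=
  SimpleGraph.fromRel (fun i j =>
    (i.val + 1 = j.val ∧ j.val ≤ q - 1) ∨
    (q - 1 ≤ i.val ∧ i.val ≤ q + p - 2 ∧ q - 1 ≤ j.val ∧ j.val ≤ q + p - 2 ∧
      ¬(i.val = q - 1 ∧ j.val = q + p - 2) ∧ ¬(j.val = q - 1 ∧ i.val = q + p - 2)) ∨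
    (i.val + 1 = j.val ∧ q + p - 2 ≤ i.val))

open Finset Matrix

set_option linter.unusedSectionVars false

/-! ### Largest eigenvalue of a symmetric matrix -/

section Spectral
variable {V : Type*} [Fintype V] [DecidableEq V]

theorem specRad_mem_upper [Nonempty V] {M : Matrix V V ℝ} (hM : M.IsHermitian) :
    (∃ v : V → ℝ, v ≠ 0 ∧ M *ᵥ v = specRad M • v) ∧
      ∀ t : ℝ, ∀ v : V → ℝ, v ≠ 0 → M *ᵥ v = t • v → t ≤ specRad M := by
  have hfin : {t : ℝ | ∃ v : V → ℝ, v ≠ 0 ∧ M *ᵥ v = t • v}.Finite := by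
    refine (Module.End.finite_spectrum (Matrix.toLin' M)).subset ?_
    rintro t ⟨v, hv, h⟩
    refine Module.End.HasEigenvalue.mem_spectrum ?_
    exact Module.End.hasEigenvalue_of_hasEigenvector (x := v)
      ⟨Module.End.mem_eigenspace_iff.2 (by simpa using h), hv⟩
  have hne : {t : ℝ | ∃ v : V → ℝ, v ≠ 0 ∧ M *ᵥ v = t • v}.Nonempty := by
    obtain ⟨i⟩ := ‹Nonempty V›
    refine ⟨hM.eigenvalues i, (hM.eigenvectorBasis i).ofLp, ?_, hM.mulVec_eigenvectorBasis i⟩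
    intro h
    apply hM.eigenvectorBasis.toBasis.ne_zero i
    ext j
    simpa using congrFun h j
  refine ⟨hne.csSup_mem hfin, fun t v hv h => le_csSup hfin.bddAbove ⟨v, hv, h⟩⟩

theorem specRad_posSemidef [Nonempty V] {M : Matrix V V ℝ} (hM : M.IsHermitian) :
    (specRad M • (1 : Matrix V V ℝ) - M).PosSemidef := by
  have hN : (specRad M • (1 : Matrix V V ℝ) - M).IsHermitian := by
    refine IsHermitian.sub ?_ hM
    simp [IsHermitian]
  rw [hN.posSemidef_iff_eigenvalues_nonneg]
  intro i
  have h := hN.mulVec_eigenvectorBasis i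
  set v : V → ℝ := (hN.eigenvectorBasis i).ofLp with hv
  have hv0 : v ≠ 0 := by
    intro h
    apply hN.eigenvectorBasis.toBasis.ne_zero i
    ext j
    simpa [hv] using congrFun h j
  have := (specRad_mem_upper hM).2 (specRad M - hN.eigenvalues i) v hv0 (by
    rw [sub_mulVec, smul_mulVec, one_mulVec] at h
    rw [sub_smul, ← h]; abel)
  simp only [Pi.zero_apply]
  linarith

theorem rayleigh_le [Nonempty V] {M : Matrix V V ℝ} (hM : M.IsHermitian) (x : V → ℝ) :
    x ⬝ᵥ M *ᵥ x ≤ specRad M * (x ⬝ᵥ x) := by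
  have := (specRad_posSemidef hM).dotProduct_mulVec_nonneg x
  simp only [sub_mulVec, smul_mulVec, one_mulVec, star_trivial, dotProduct_sub, dotProduct_smul,
    smul_eq_mul] at this
  linarith

/-- A vector attaining the Rayleigh bound is an eigenvector. -/
theorem rayleigh_eq [Nonempty V] {M : Matrix V V ℝ} (hM : M.IsHermitian) (x : V → ℝ)
    (h : specRad M * (x ⬝ᵥ x) ≤ x ⬝ᵥ M *ᵥ x) : M *ᵥ x = specRad M • x := by
  have h1 := (specRad_posSemidef hM).dotProduct_mulVec_zero_iff x
  have h2 := rayleigh_le hM x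
  simp only [sub_mulVec, smul_mulVec, one_mulVec, star_trivial, dotProduct_sub, dotProduct_smul,
    smul_eq_mul] at h1
  exact (sub_eq_zero.1 (h1.1 (by linarith))).symm

end Spectral

/-! ### The matrix of a graph: action on vectors, Perron vectors -/

section Graph
variable {V : Type*} [Fintype V] [DecidableEq V]

open Classical in
theorem Aalpha_mulVec (α : ℝ) (G : SimpleGraph V) (x : V → ℝ) (u : V) :
    (Aalpha α G *ᵥ x) u = ∑ v, if G.Adj u v then α * x u + (1 - α) * x v else 0 := by
  unfold Aalpha
  simp only [add_mulVec, smul_mulVec, Pi.add_apply, Pi.smul_apply, mulVec_diagonal, smul_eq_mul,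
    SimpleGraph.adjMatrix_mulVec_apply]
  rw [← Finset.sum_filter, Finset.sum_add_distrib, Finset.sum_const, ← Finset.mul_sum,
    nsmul_eq_mul, SimpleGraph.neighborFinset_eq_filter, ← SimpleGraph.card_neighborFinset_eq_degree,
    SimpleGraph.neighborFinset_eq_filter]
  ring

theorem Aalpha_isHermitian (α : ℝ) (G : SimpleGraph V) : (Aalpha α G).IsHermitian := by
  classical
  unfold Aalpha
  ext i j
  simp [Matrix.diagonal, SimpleGraph.adj_comm, eq_comm]
  split_ifs with h
  · rw [h]
  · rfl

theorem rhoAlpha_congr {W : Type*} [Fintype W] [DecidableEq W] (α : ℝ) {G : SimpleGraph V}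
    {H : SimpleGraph W} (e : G ≃g H) : rhoAlpha α G = rhoAlpha α H := by
  classical
  have key : ∀ (x : W → ℝ) (u : V), (Aalpha α G *ᵥ (x ∘ e)) u = (Aalpha α H *ᵥ x) (e u) := by
    intro x u
    rw [Aalpha_mulVec, Aalpha_mulVec, ← Equiv.sum_comp e.toEquiv]
    refine Finset.sum_congr rfl fun v _ => ?_
    simp [e.map_adj_iff]
  unfold rhoAlpha specRad
  congr 1
  ext t
  constructor
  · rintro ⟨x, hx, h⟩
    have hxe : (x ∘ e.symm) ∘ e = x := by ext u; simp
    refine ⟨x ∘ e.symm, fun h0 => hx ?_, ?_⟩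
    · rw [← hxe, h0]; rfl
    · ext w
      have := key (x ∘ e.symm) (e.symm w)
      rw [hxe, h] at this
      simpa using this.symm
  · rintro ⟨x, hx, h⟩
    refine ⟨x ∘ e, fun h0 => hx ?_, ?_⟩
    · ext w
      simpa using congrFun h0 (e.symm w)
    · ext u
      rw [key, h]; rfl

/-- **Perron vector**: the absolute value of a top eigenvector is again a top eigenvector, and
its zero set is closed under adjacency. -/
theorem exists_perron {α : ℝ} (hα0 : 0 ≤ α) (hα1 : α < 1) {G : SimpleGraph V}
    (hG : G.Connected) :
    ∃ x : V → ℝ, (∀ v, 0 < x v) ∧ Aalpha α G *ᵥ x = rhoAlpha α G • x := by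
  classical
  have := hG.nonempty
  have hH := Aalpha_isHermitian α G
  obtain ⟨⟨z, hz0, hz⟩, -⟩ := specRad_mem_upper hH
  set x : V → ℝ := fun v => |z v| with hx
  have hxx : x ⬝ᵥ x = z ⬝ᵥ z := by simp [dotProduct, hx]
  have hle : z ⬝ᵥ Aalpha α G *ᵥ z ≤ x ⬝ᵥ Aalpha α G *ᵥ x := by
    simp only [dotProduct, Aalpha_mulVec, Finset.mul_sum]
    refine Finset.sum_le_sum fun u _ => Finset.sum_le_sum fun v _ => ?_
    split_ifs
    · have h1 : z u * z v ≤ |z u| * |z v| := by rw [← abs_mul]; exact le_abs_self _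
      have h2 : |z u| * |z u| = z u * z u := abs_mul_abs_self _
      have h3 := mul_le_mul_of_nonneg_left h1 (sub_nonneg.2 hα1.le)
      simp only [hx]
      nlinarith
    · simp
  have hxe : Aalpha α G *ᵥ x = rhoAlpha α G • x := by
    refine rayleigh_eq hH x ?_
    rw [hxx]
    refine le_trans (le_of_eq ?_) hle
    rw [hz, dotProduct_smul, smul_eq_mul]
  refine ⟨x, ?_, hxe⟩
  have hxn : ∀ v, 0 ≤ x v := fun v => abs_nonneg _
  have hstep : ∀ u v, G.Adj u v → x u = 0 → x v = 0 := by
    intro u v huv hu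
    have h := congrFun hxe u
    rw [Aalpha_mulVec, Pi.smul_apply, hu, smul_zero] at h
    rw [Finset.sum_eq_zero_iff_of_nonneg] at h
    · have := h v (Finset.mem_univ _)
      rw [if_pos huv] at this
      simpa [(sub_pos.2 hα1).ne'] using this
    · intro w _
      split_ifs
      · have := mul_nonneg (sub_nonneg.2 hα1.le) (hxn w)
        linarith
      · rfl
  intro v
  refine lt_of_le_of_ne (hxn v) fun h0 => hz0 ?_
  ext w
  have : x w = 0 := by
    obtain ⟨p⟩ := hG.preconnected v w
    induction p with
    | nil => exact h0.symm
    | cons hadj p ih => exact ih (hstep _ _ hadj h0.symm).symm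
  exact abs_eq_zero.1 this

/-- For `G ≤ H` with `G` connected the index grows, strictly unless `G = H`. -/
theorem rhoAlpha_mono {α : ℝ} (hα0 : 0 ≤ α) (hα1 : α < 1) {G H : SimpleGraph V}
    (hG : G.Connected) (hGH : G ≤ H) :
    rhoAlpha α G ≤ rhoAlpha α H ∧ (rhoAlpha α G = rhoAlpha α H → G = H) := by
  classical
  have := hG.nonempty
  obtain ⟨x, hx, hxe⟩ := exists_perron hα0 hα1 hG
  have hxx : 0 < x ⬝ᵥ x := by
    simp only [dotProduct]
    exact Finset.sum_pos (fun v _ => mul_pos (hx v) (hx v)) Finset.univ_nonempty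
  have hterm : ∀ u v, (if G.Adj u v then α * x u + (1 - α) * x v else 0) ≤
      (if H.Adj u v then α * x u + (1 - α) * x v else 0) := by
    intro u v
    have : 0 ≤ α * x u + (1 - α) * x v :=
      add_nonneg (mul_nonneg hα0 (hx u).le) (mul_nonneg (sub_nonneg.2 hα1.le) (hx v).le)
    by_cases h : G.Adj u v
    · simp [h, hGH h]
    · rw [if_neg h]; split_ifs <;> simp [this]
  have hle : rhoAlpha α G * (x ⬝ᵥ x) ≤ x ⬝ᵥ Aalpha α H *ᵥ x := by
    have : rhoAlpha α G * (x ⬝ᵥ x) = x ⬝ᵥ Aalpha α G *ᵥ x := by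
      rw [hxe, dotProduct_smul, smul_eq_mul]
    rw [this]
    simp only [dotProduct, Aalpha_mulVec]
    exact Finset.sum_le_sum fun u _ => mul_le_mul_of_nonneg_left
      (Finset.sum_le_sum fun v _ => hterm u v) (hx u).le
  have hR := rayleigh_le (Aalpha_isHermitian α H) x
  refine ⟨le_of_mul_le_mul_right (hle.trans hR) hxx, fun heq => le_antisymm hGH ?_⟩
  have hxe' : Aalpha α H *ᵥ x = rhoAlpha α H • x :=
    rayleigh_eq (Aalpha_isHermitian α H) x (by rw [heq] at hle; exact hle)
  intro u v huv
  by_contra hn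
  have h1 := congrFun hxe u
  have h2 := congrFun hxe' u
  rw [← heq, Pi.smul_apply] at h2
  rw [Pi.smul_apply, ← h2, Aalpha_mulVec, Aalpha_mulVec,
    Finset.sum_eq_sum_iff_of_le fun v _ => hterm u v] at h1
  have h3 := h1 v (Finset.mem_univ _)
  rw [if_neg hn, if_pos huv] at h3
  have := mul_nonneg hα0 (hx u).le
  have := mul_pos (sub_pos.2 hα1) (hx v)
  linarith

end Graph

/-! ### Layered graphs -/

section Layered
variable {V : Type*} [Fintype V] [DecidableEq V]

/-- The graph in which two distinct vertices are adjacent iff their labels differ by at most one,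
i.e. the sequential join of the cliques formed by the level sets of `L`. -/
def layered (L : V → ℕ) : SimpleGraph V where
  Adj u v := u ≠ v ∧ L u ≤ L v + 1 ∧ L v ≤ L u + 1
  symm := ⟨fun _ _ h => ⟨h.1.symm, h.2.2, h.2.1⟩⟩
  loopless := ⟨fun _ h => h.1 rfl⟩

/-- `L` takes exactly the values `0, …, k`. -/
def IsLayering (k : ℕ) (L : V → ℕ) : Prop :=
  (∀ v, L v ≤ k) ∧ ∀ j ≤ k, ∃ v, L v = j

/-- Indicator of `|a - b| ≤ 1`. -/
def nearInd (a b : ℕ) : ℝ := if a ≤ b + 1 ∧ b ≤ a + 1 then 1 else 0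

theorem nearInd_comm (a b : ℕ) : nearInd a b = nearInd b a := by
  simp only [nearInd, and_comm]

theorem nearInd_self (a : ℕ) : nearInd a a = 1 := by simp [nearInd]

/-- The `u`-entry of `(A_α + I) x` for the layered graph; adding `I` makes the sum run over all
vertices, including `u` itself. -/
noncomputable def layRow (α : ℝ) (L : V → ℕ) (x : V → ℝ) (u : V) : ℝ :=
  ∑ v, nearInd (L u) (L v) * (α * x u + (1 - α) * x v)

/-- Contribution of an ordered pair of vertices with (label, value) pairs `p` and `q` to the
quadratic form of `A_α + I`, symmetrized. -/
noncomputable def kern (α : ℝ) (p q : ℕ × ℝ) : ℝ :=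
  nearInd p.1 q.1 * (α * (p.2 ^ 2 + q.2 ^ 2) / 2 + (1 - α) * (p.2 * q.2))

theorem kern_comm (α : ℝ) (p q : ℕ × ℝ) : kern α p q = kern α q p := by
  unfold kern
  rw [nearInd_comm]
  ring

theorem kern_self (α : ℝ) (p : ℕ × ℝ) : kern α p p = p.2 ^ 2 := by
  unfold kern
  rw [nearInd_self]
  ring

theorem layered_mulVec (α : ℝ) (L : V → ℕ) (x : V → ℝ) (u : V) :
    (Aalpha α (layered L) *ᵥ x) u = layRow α L x u - x u := by
  classical
  rw [Aalpha_mulVec, layRow, ← Finset.add_sum_erase _ _ (Finset.mem_univ u),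
    ← Finset.add_sum_erase _ _ (Finset.mem_univ u), nearInd_self]
  have : ∀ v ∈ univ.erase u, (if (layered L).Adj u v then α * x u + (1 - α) * x v else 0) =
      nearInd (L u) (L v) * (α * x u + (1 - α) * x v) := by
    intro v hv
    have hne : u ≠ v := (Finset.ne_of_mem_erase hv).symm
    simp only [layered, nearInd, hne, ne_eq, not_false_eq_true, true_and]
    split_ifs <;> simp
  rw [Finset.sum_congr rfl this]
  simp
  ring

theorem sum_mul_layRow (α : ℝ) (L : V → ℕ) (x : V → ℝ) :
    ∑ u, x u * layRow α L x u = ∑ u, ∑ v, kern α (L u, x u) (L v, x v) := by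
  have h1 : ∑ u, x u * layRow α L x u =
      ∑ u, ∑ v, nearInd (L u) (L v) * (α * x u ^ 2 + (1 - α) * (x u * x v)) := by
    simp only [layRow, Finset.mul_sum]
    exact Finset.sum_congr rfl fun u _ => Finset.sum_congr rfl fun v _ => by ring
  have h2 : ∑ u, ∑ v, nearInd (L u) (L v) * (α * x u ^ 2 + (1 - α) * (x u * x v)) =
      ∑ u, ∑ v, nearInd (L u) (L v) * (α * x v ^ 2 + (1 - α) * (x u * x v)) := by
    rw [Finset.sum_comm]
    refine Finset.sum_congr rfl fun u _ => Finset.sum_congr rfl fun v _ => ?_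
    rw [nearInd_comm]; ring
  have h3 : ∑ u, ∑ v, kern α (L u, x u) (L v, x v) =
      (∑ u, ∑ v, nearInd (L u) (L v) * (α * x u ^ 2 + (1 - α) * (x u * x v)) +
      ∑ u, ∑ v, nearInd (L u) (L v) * (α * x v ^ 2 + (1 - α) * (x u * x v))) / 2 := by
    rw [← Finset.sum_add_distrib, Finset.sum_div]
    refine Finset.sum_congr rfl fun u _ => ?_
    rw [← Finset.sum_add_distrib, Finset.sum_div]
    refine Finset.sum_congr rfl fun v _ => ?_
    simp only [kern]; ring
  rw [h1, h3, ← h2]; ring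

/-- Change of a symmetric double sum when the state of a single vertex changes. -/
theorem sum_kern_update {S : Type*} (K : S → S → ℝ) (hK : ∀ a b, K a b = K b a) (p : V → S)
    (w : V) (s : S) :
    ∑ u, ∑ v, K (Function.update p w s u) (Function.update p w s v) =
      ∑ u, ∑ v, K (p u) (p v) + 2 * ∑ v, (K (p v) s - K (p v) (p w)) +
        (K s s - 2 * K (p w) s + K (p w) (p w)) := by
  have hsplit : ∀ q : V → S, ∑ u, ∑ v, K (q u) (q v) =
      K (q w) (q w) + 2 * ∑ v ∈ univ.erase w, K (q v) (q w) +
        ∑ u ∈ univ.erase w, ∑ v ∈ univ.erase w, K (q u) (q v) := by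
    intro q
    rw [← Finset.add_sum_erase _ _ (Finset.mem_univ w),
      ← Finset.add_sum_erase _ _ (Finset.mem_univ w)]
    have : ∀ u ∈ univ.erase w, ∑ v, K (q u) (q v) =
        K (q u) (q w) + ∑ v ∈ univ.erase w, K (q u) (q v) := fun u _ => by
      rw [← Finset.add_sum_erase _ _ (Finset.mem_univ w)]
    rw [Finset.sum_congr rfl this, Finset.sum_add_distrib]
    simp only [hK (q w)]
    ring
  have hu : ∀ v ∈ univ.erase w, Function.update p w s v = p v := fun v hv =>
    Function.update_of_ne (Finset.ne_of_mem_erase hv) _ _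
  rw [hsplit (Function.update p w s), hsplit p,
    ← Finset.add_sum_erase _ (fun v => K (p v) s - K (p v) (p w)) (Finset.mem_univ w),
    Finset.sum_sub_distrib]
  have e1 : ∑ v ∈ univ.erase w, K (Function.update p w s v) (Function.update p w s w) =
      ∑ v ∈ univ.erase w, K (p v) s :=
    Finset.sum_congr rfl fun v hv => by rw [hu v hv, Function.update_self]
  have e2 : ∑ u ∈ univ.erase w, ∑ v ∈ univ.erase w,
      K (Function.update p w s u) (Function.update p w s v) =
      ∑ u ∈ univ.erase w, ∑ v ∈ univ.erase w, K (p u) (p v) :=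
    Finset.sum_congr rfl fun u hu' => Finset.sum_congr rfl fun v hv => by rw [hu u hu', hu v hv]
  rw [e1, e2, Function.update_self]
  ring

theorem layered_connected {k : ℕ} {L : V → ℕ} (hL : IsLayering k L) :
    (layered L).Connected := by
  obtain ⟨v0, hv0⟩ := hL.2 0 (Nat.zero_le _)
  have key : ∀ j, ∀ v, L v = j → (layered L).Reachable v0 v := by
    intro j
    induction j with
    | zero =>
      intro v hv
      by_cases h : v0 = v
      · rw [h]
      · exact SimpleGraph.Adj.reachable ⟨h, by omega, by omega⟩
    | succ j ih =>
      intro v hv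
      obtain ⟨w, hw⟩ := hL.2 j (by have := hL.1 v; omega)
      refine (ih w hw).trans (SimpleGraph.Adj.reachable ⟨?_, by omega, by omega⟩)
      rintro rfl; omega
  have : Nonempty V := ⟨v0⟩
  exact ⟨fun u v => (key _ u rfl).symm.trans (key _ v rfl)⟩

/-- `L` is a layering with labels `0, …, k` whose graph has the largest index, and `x` is a
Perron vector of that graph. -/
structure IsOptimal (α : ℝ) (k : ℕ) (L : V → ℕ) (x : V → ℝ) : Prop where
  lay : IsLayering k L
  max : ∀ L' : V → ℕ, IsLayering k L' → rhoAlpha α (layered L') ≤ rhoAlpha α (layered L)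
  pos : ∀ v, 0 < x v
  eig : ∀ u, layRow α L x u = (rhoAlpha α (layered L) + 1) * x u

/-- No test vector on another layering beats the optimum, and a vector that ties with it
satisfies the eigenvector equations there. -/
theorem IsOptimal.compare {α : ℝ} {k : ℕ} {L : V → ℕ} {x : V → ℝ} (h : IsOptimal α k L x)
    {L' : V → ℕ} (hL' : IsLayering k L') (y : V → ℝ)
    (hle : (rhoAlpha α (layered L) + 1) * ∑ u, y u ^ 2 ≤
      ∑ u, ∑ v, kern α (L' u, y u) (L' v, y v)) :
    (∑ u, ∑ v, kern α (L' u, y u) (L' v, y v) =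
      (rhoAlpha α (layered L) + 1) * ∑ u, y u ^ 2) ∧
    ∀ u, layRow α L' y u = (rhoAlpha α (layered L) + 1) * y u := by
  have : Nonempty V := (layered_connected hL').nonempty
  have hH := Aalpha_isHermitian α (layered L')
  have hR := rayleigh_le hH y
  have hyy : y ⬝ᵥ y = ∑ u, y u ^ 2 := by simp [dotProduct, sq]
  have hq : y ⬝ᵥ Aalpha α (layered L') *ᵥ y =
      ∑ u, ∑ v, kern α (L' u, y u) (L' v, y v) - ∑ u, y u ^ 2 := by
    rw [← sum_mul_layRow, ← Finset.sum_sub_distrib]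
    simp only [dotProduct, layered_mulVec]
    exact Finset.sum_congr rfl fun u _ => by ring
  have hm := h.max L' hL'
  change _ ≤ rhoAlpha α (layered L') * _ at hR
  have hnn : 0 ≤ ∑ u, y u ^ 2 := Finset.sum_nonneg fun u _ => sq_nonneg _
  have hm' := mul_le_mul_of_nonneg_right hm hnn
  rw [hyy, hq] at hR
  refine ⟨by linarith, fun u => ?_⟩
  have he : Aalpha α (layered L') *ᵥ y = rhoAlpha α (layered L') • y := by
    refine rayleigh_eq hH y ?_
    rw [hyy, hq]
    change rhoAlpha α (layered L') * _ ≤ _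
    linarith
  have hu := congrFun he u
  rw [layered_mulVec, Pi.smul_apply, smul_eq_mul] at hu
  have hpp : (rhoAlpha α (layered L) - rhoAlpha α (layered L')) * ∑ u, y u ^ 2 = 0 := by
    linarith
  rcases mul_eq_zero.1 hpp with h0 | h0
  · rw [sub_eq_zero.1 h0]; linarith
  · have : y u = 0 := by
      have := (Finset.sum_eq_zero_iff_of_nonneg fun v _ => sq_nonneg (y v)).1 h0 u (mem_univ _)
      simpa using this
    rw [this] at hu ⊢
    linarith

theorem IsOptimal.sum_kern {α : ℝ} {k : ℕ} {L : V → ℕ} {x : V → ℝ} (h : IsOptimal α k L x) :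
    ∑ u, ∑ v, kern α (L u, x u) (L v, x v) =
      (rhoAlpha α (layered L) + 1) * ∑ u, x u ^ 2 := by
  rw [← sum_mul_layRow, Finset.mul_sum]
  exact Finset.sum_congr rfl fun u _ => by rw [h.eig]; ring

theorem exists_isOptimal {α : ℝ} (hα0 : 0 ≤ α) (hα1 : α < 1) {k : ℕ} {L : V → ℕ}
    (hL : IsLayering k L)
    (hmax : ∀ L' : V → ℕ, IsLayering k L' → rhoAlpha α (layered L') ≤ rhoAlpha α (layered L)) :
    ∃ x, IsOptimal α k L x := by
  obtain ⟨x, hx, he⟩ := exists_perron hα0 hα1 (layered_connected hL)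
  refine ⟨x, hL, hmax, hx, fun u => ?_⟩
  have hu := congrFun he u
  rw [layered_mulVec, Pi.smul_apply, smul_eq_mul] at hu
  linarith

theorem exists_max_layering (α : ℝ) {k : ℕ} {L : V → ℕ} (hL : IsLayering k L) :
    ∃ L₀ : V → ℕ, IsLayering k L₀ ∧
      ∀ L' : V → ℕ, IsLayering k L' → rhoAlpha α (layered L') ≤ rhoAlpha α (layered L₀) := by
  classical
  have hfin : {L' : V → ℕ | IsLayering k L'}.Finite := by
    refine (Fintype.piFinset fun _ : V => Finset.range (k + 1)).finite_toSet.subset ?_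
    intro L' h
    simp only [Finset.mem_coe, Fintype.mem_piFinset, Finset.mem_range]
    exact fun v => Nat.lt_succ_of_le (h.1 v)
  obtain ⟨L₀, h0, h1⟩ := Set.exists_max_image _ (fun L' => rhoAlpha α (layered L')) hfin ⟨L, hL⟩
  exact ⟨L₀, h0, h1⟩

end Layered

/-! ### Only one layer of an optimal layering has several vertices -/

section Concentrate
variable {V : Type*} [Fintype V] [DecidableEq V]

theorem IsLayering.update {k : ℕ} {L : V → ℕ} (hL : IsLayering k L) {w w₂ : V} (hne : w ≠ w₂)
    (hw : L w = L w₂) {j : ℕ} (hj : j ≤ k) : IsLayering k (Function.update L w j) := by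
  refine ⟨fun v => ?_, fun l hl => ?_⟩
  · by_cases h : v = w
    · rw [h, Function.update_self]; exact hj
    · rw [Function.update_of_ne h]; exact hL.1 v
  · obtain ⟨v, hv⟩ := hL.2 l hl
    by_cases h : v = w
    · exact ⟨w₂, by rw [Function.update_of_ne hne.symm, ← hw, ← h, hv]⟩
    · exact ⟨v, by rw [Function.update_of_ne h, hv]⟩

/-- Replacing `w'` by a twin of `w`, carrying the same value, cannot increase the energy.
The two quantities `2 ∑ kern - (ρ + 1) x²` are the energies of `w` and of `w'`. -/
theorem IsOptimal.clone {α : ℝ} {k : ℕ} {L : V → ℕ} {x : V → ℝ} (h : IsOptimal α k L x)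
    {w w' w₂' : V} (hne : w' ≠ w₂') (hw' : L w' = L w₂')
    (hle : 0 ≤ (2 * ∑ v, kern α (L v, x v) (L w, x w) -
        (rhoAlpha α (layered L) + 1) * x w ^ 2) -
      (2 * ∑ v, kern α (L v, x v) (L w', x w') -
        (rhoAlpha α (layered L) + 1) * x w' ^ 2) +
      (x w ^ 2 - 2 * kern α (L w', x w') (L w, x w) + x w' ^ 2)) :
    ((2 * ∑ v, kern α (L v, x v) (L w, x w) -
        (rhoAlpha α (layered L) + 1) * x w ^ 2) -
      (2 * ∑ v, kern α (L v, x v) (L w', x w') -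
        (rhoAlpha α (layered L) + 1) * x w' ^ 2) +
      (x w ^ 2 - 2 * kern α (L w', x w') (L w, x w) + x w' ^ 2) = 0) ∧
    ∀ u, layRow α (Function.update L w' (L w)) (Function.update x w' (x w)) u =
      (rhoAlpha α (layered L) + 1) * Function.update x w' (x w) u := by
  set p : V → ℕ × ℝ := fun u => (L u, x u) with hp
  have hup : ∀ u, Function.update p w' (p w) u =
      (Function.update L w' (L w) u, Function.update x w' (x w) u) := by
    intro u
    by_cases hu : u = w'
    · subst hu; simp [hp]
    · simp [hp, Function.update_of_ne hu]
  have hsum := sum_kern_update (kern α) (kern_comm α) p w' (p w)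
  simp only [hup, kern_self, Finset.sum_sub_distrib] at hsum
  simp only [hp] at hsum
  have hy : ∑ u, Function.update x w' (x w) u ^ 2 = ∑ u, x u ^ 2 + x w ^ 2 - x w' ^ 2 := by
    rw [← Finset.add_sum_erase _ _ (Finset.mem_univ w'),
      ← Finset.add_sum_erase _ (fun u => x u ^ 2) (Finset.mem_univ w'), Function.update_self]
    rw [Finset.sum_congr rfl fun v hv => by
      rw [Function.update_of_ne (Finset.ne_of_mem_erase hv)]]
    ring
  have hc := h.compare (h.lay.update hne hw' (h.lay.1 w)) (Function.update x w' (x w)) (by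
    rw [hsum, hy, h.sum_kern]; linarith)
  rw [hsum, hy, h.sum_kern] at hc
  exact ⟨by linarith [hc.1], hc.2⟩

theorem IsOptimal.no_two_fat_lt {α : ℝ} (hα0 : 0 ≤ α) (hα1 : α < 1) {k : ℕ} (hk : 2 ≤ k)
    {L : V → ℕ} {x : V → ℝ} (h : IsOptimal α k L x) {w w₂ w' w₂' : V} (hne : w ≠ w₂)
    (hw : L w = L w₂) (hne' : w' ≠ w₂') (hw' : L w' = L w₂') (hlt : L w < L w') : False := by
  have h1 := h.clone (w := w) hne' hw'
  have h2 := h.clone (w := w') hne hw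
  rw [kern_comm α (L w, x w)] at h2
  have hxw' := h.pos w'
  have hxw := h.pos w
  -- The cloning gains in the two directions add up to twice this nonnegative quantity.
  have hD : 0 ≤ x w ^ 2 - 2 * kern α (L w', x w') (L w, x w) + x w' ^ 2 ∧
      (x w ^ 2 - 2 * kern α (L w', x w') (L w, x w) + x w' ^ 2 ≤ 0 →
        L w' = L w + 1 ∧ x w = x w') := by
    by_cases hn : L w' = L w + 1
    · have : nearInd (L w') (L w) = 1 := if_pos ⟨by omega, by omega⟩
      simp only [kern, this]
      have e : x w ^ 2 - 2 * (1 * (α * (x w' ^ 2 + x w ^ 2) / 2 + (1 - α) * (x w' * x w))) +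
          x w' ^ 2 = (1 - α) * (x w - x w') ^ 2 := by ring
      rw [e]
      refine ⟨mul_nonneg (by linarith) (sq_nonneg _), fun h0 => ⟨hn, ?_⟩⟩
      have : (x w - x w') ^ 2 = 0 :=
        le_antisymm (nonpos_of_mul_nonpos_right h0 (by linarith)) (sq_nonneg _)
      exact sub_eq_zero.1 (pow_eq_zero_iff (two_ne_zero) |>.1 this)
    · have : nearInd (L w') (L w) = 0 := if_neg (by omega)
      simp only [kern, this]
      rw [zero_mul, mul_zero, sub_zero]
      exact ⟨by positivity, fun h0 => absurd h0 (not_le.2 (by positivity))⟩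
  set D := x w ^ 2 - 2 * kern α (L w', x w') (L w, x w) + x w' ^ 2
  set a := 2 * ∑ v, kern α (L v, x v) (L w, x w) - (rhoAlpha α (layered L) + 1) * x w ^ 2
  set b := 2 * ∑ v, kern α (L v, x v) (L w', x w') - (rhoAlpha α (layered L) + 1) * x w' ^ 2
  have hDeq : x w' ^ 2 - 2 * kern α (L w', x w') (L w, x w) + x w ^ 2 = D := by
    simp only [D]; ring
  rw [hDeq] at h2
  have hab : 0 ≤ a - b + D ∧ D ≤ 0 := by
    by_cases hc : 0 ≤ a - b + D
    · have := (h1 hc).1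
      by_cases hc' : 0 ≤ b - a + D
      · have := (h2 hc').1
        exact ⟨hc, by linarith⟩
      · exact ⟨hc, by linarith⟩
    · have := h2 (by linarith [hD.1])
      exact ⟨by linarith [hD.1], by linarith [hD.1]⟩
  obtain ⟨hL, hx⟩ := hD.2 hab.2
  have hrow := (h1 hab.1).2
  rw [hx, Function.update_eq_self] at hrow
  have hnear : ∀ u, u ≠ w' → nearInd (L u) (L w) = nearInd (L u) (L w') := by
    intro u hu
    have e := (hrow u).trans (h.eig u).symm
    have hcoef : 0 < α * x u + (1 - α) * x w' :=
      add_pos_of_nonneg_of_pos (mul_nonneg hα0 (h.pos u).le) (mul_pos (by linarith) hxw')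
    simp only [layRow, Function.update_of_ne hu] at e
    rw [← Finset.add_sum_erase _ _ (Finset.mem_univ w'),
      ← Finset.add_sum_erase _ (fun v => nearInd (L u) (L v) * _) (Finset.mem_univ w'),
      Function.update_self,
      Finset.sum_congr rfl fun v hv => by
        rw [Function.update_of_ne (Finset.ne_of_mem_erase hv)]] at e
    exact mul_right_cancel₀ hcoef.ne' (add_right_cancel e)
  by_cases h0 : L w = 0
  · obtain ⟨u, hu⟩ := h.lay.2 2 hk
    have := hnear u (by rintro rfl; omega)
    rw [nearInd, nearInd, if_neg (by omega), if_pos (by omega)] at this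
    norm_num at this
  · obtain ⟨u, hu⟩ := h.lay.2 (L w - 1) (by have := h.lay.1 w; omega)
    have := hnear u (by rintro rfl; omega)
    rw [nearInd, nearInd, if_pos (by omega), if_neg (by omega)] at this
    norm_num at this

theorem IsOptimal.no_two_fat {α : ℝ} (hα0 : 0 ≤ α) (hα1 : α < 1) {k : ℕ} (hk : 2 ≤ k)
    {L : V → ℕ} {x : V → ℝ} (h : IsOptimal α k L x) {w w₂ w' w₂' : V} (hne : w ≠ w₂)
    (hw : L w = L w₂) (hne' : w' ≠ w₂') (hw' : L w' = L w₂') : L w = L w' := by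
  rcases lt_trichotomy (L w) (L w') with hlt | heq | hlt
  · exact (h.no_two_fat_lt hα0 hα1 hk hne hw hne' hw' hlt).elim
  · exact heq
  · exact (h.no_two_fat_lt hα0 hα1 hk hne' hw' hne hw hlt).elim

end Concentrate

/-! ### The large layer of an optimal layering is central -/

section Balance
variable {V : Type*} [Fintype V] [DecidableEq V]

theorem sum_layer {L : V → ℕ} {j : ℕ} {v : V} (hv : ∀ u, L u = j ↔ u = v) (F : V → ℝ) :
    ∑ u, (if L u = j then F u else 0) = F v := by
  simp [hv]

/-- Moving one vertex of the large layer `i` to layer `i + 1` trades an edge to layer `i - 1`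
for an edge to layer `i + 2`. -/
theorem IsOptimal.no_shift {α : ℝ} (hα0 : 0 ≤ α) (hα1 : α < 1) {k i : ℕ}
    {L : V → ℕ} {x : V → ℝ} (h : IsOptimal α k L x) {w w₂ : V} (hne : w ≠ w₂)
    (hw : L w = i) (hw₂ : L w₂ = i) (hik : i + 2 ≤ k) {r : ℕ → V}
    (hr : ∀ j ≤ k, j ≠ i → ∀ u, L u = j ↔ u = r j)
    (hlt : i = 0 ∨ x (r (i - 1)) < x (r (i + 2))) : False := by
  have hx := h.pos w
  set F : ℝ → ℝ := fun t => α * (t ^ 2 + x w ^ 2) / 2 + (1 - α) * (t * x w) with hF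
  have hsum := sum_kern_update (kern α) (kern_comm α) (fun u => (L u, x u)) w (i + 1, x w)
  have hup : ∀ u, Function.update (fun u => (L u, x u)) w (i + 1, x w) u =
      (Function.update L w (i + 1) u, x u) := by
    intro u
    by_cases hu : u = w
    · subst hu; simp
    · simp [Function.update_of_ne hu]
  have hkk : kern α (L w, x w) (i + 1, x w) = x w ^ 2 := by
    have : nearInd i (i + 1) = 1 := if_pos ⟨by omega, by omega⟩
    simp only [kern, hw, this]; ring
  have hterm : ∀ v, kern α (L v, x v) (i + 1, x w) - kern α (L v, x v) (L w, x w) =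
      (if L v = i + 2 then F (x v) else 0) - (if L v + 1 = i then F (x v) else 0) := by
    intro v
    simp only [kern, ← sub_mul, hw, hF]
    by_cases h1 : L v = i + 2
    · have e1 : nearInd (L v) (i + 1) = 1 := if_pos ⟨by omega, by omega⟩
      have e2 : nearInd (L v) i = 0 := if_neg (by omega)
      rw [e1, e2, if_pos h1, if_neg (by omega)]; ring
    · rw [if_neg h1]
      by_cases h2 : L v + 1 = i
      · have e1 : nearInd (L v) (i + 1) = 0 := if_neg (by omega)
        have e2 : nearInd (L v) i = 1 := if_pos ⟨by omega, by omega⟩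
        rw [e1, e2, if_pos h2]; ring
      · have e : nearInd (L v) (i + 1) = nearInd (L v) i := by
          simp only [nearInd]; congr 1; apply propext; omega
        rw [e, if_neg h2]; ring
  simp only [hup, kern_self, hkk, hterm, Finset.sum_sub_distrib] at hsum
  rw [sum_layer (hr (i + 2) hik (by omega)) (fun v => F (x v))] at hsum
  have hlow : ∑ v, (if L v + 1 = i then F (x v) else 0) < F (x (r (i + 2))) := by
    have hp := h.pos (r (i + 2))
    have hFmono : ∀ s t : ℝ, 0 ≤ s → s < t → F s < F t := by
      intro s t hs hst
      simp only [hF]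
      have : s ^ 2 ≤ t ^ 2 := by gcongr
      have h3 : (1 - α) * (s * x w) < (1 - α) * (t * x w) := by
        have : 0 < 1 - α := by linarith
        gcongr
      nlinarith
    rcases Nat.eq_zero_or_pos i with h0 | h0
    · subst h0
      simp only [Nat.add_eq_zero_iff, one_ne_zero, and_false, if_false, Finset.sum_const_zero]
      refine lt_of_le_of_lt ?_ (hFmono 0 _ le_rfl hp)
      simp only [hF]; positivity
    · have : ∀ v, (L v + 1 = i) = (L v = i - 1) := fun v => propext (by omega)
      simp only [this]
      rw [sum_layer (hr (i - 1) (by omega) (by omega)) (fun v => F (x v))]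
      exact hFmono _ _ (h.pos _).le (hlt.resolve_left (by omega))
  have hc := (h.compare (h.lay.update hne (hw.trans hw₂.symm) (j := i + 1) (by omega)) x (by
    rw [hsum, h.sum_kern]; linarith)).1
  rw [hsum, h.sum_kern] at hc
  linarith

/-- Reflecting the labels in `[s, 2i+1-s]` about `i + 1/2`. -/
def reflLabel (i s a : ℕ) : ℕ := if s ≤ a ∧ a + s ≤ 2 * i + 1 then 2 * i + 1 - a else a

/-- `1` just left of the reflected interval, `-1` just right of it. For `s = 0` there is no label
on the left. -/
def outerSign (i s a : ℕ) : ℝ :=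
  (if a + 1 = s then 1 else 0) - (if a + s = 2 * i + 2 then 1 else 0)

/-- `1` at the right end of the reflected interval, `-1` at its left end. -/
def innerSign (i s a : ℕ) : ℝ :=
  (if a + s = 2 * i + 1 then 1 else 0) - (if a = s then 1 else 0)

theorem reflLabel_cases {i s : ℕ} (hs : s + 1 ≤ i) (a : ℕ) :
    ((a + 1 < s ∨ 2 * i + 2 < a + s) ∧
      reflLabel i s a = a ∧ outerSign i s a = 0 ∧ innerSign i s a = 0) ∨
    (a + 1 = s ∧ reflLabel i s a = a ∧ outerSign i s a = 1 ∧ innerSign i s a = 0) ∨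
    (a + s = 2 * i + 2 ∧ reflLabel i s a = a ∧ outerSign i s a = -1 ∧ innerSign i s a = 0) ∨
    (a = s ∧ reflLabel i s a = 2 * i + 1 - a ∧ outerSign i s a = 0 ∧ innerSign i s a = -1) ∨
    (a + s = 2 * i + 1 ∧ reflLabel i s a = 2 * i + 1 - a ∧ outerSign i s a = 0 ∧
      innerSign i s a = 1) ∨
    (s < a ∧ a + s < 2 * i + 1 ∧ reflLabel i s a = 2 * i + 1 - a ∧ outerSign i s a = 0 ∧
      innerSign i s a = 0) := by
  unfold reflLabel outerSign innerSign
  split_ifs <;> norm_num <;> omega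

/-- Reflecting the labels performs a switch on the layers at the ends of the interval: those
just outside exchange their neighbours just inside. -/
theorem nearInd_reflLabel {i s : ℕ} (hs : s + 1 ≤ i) (a b : ℕ) :
    nearInd (reflLabel i s a) (reflLabel i s b) = nearInd a b +
      (outerSign i s a * innerSign i s b + innerSign i s a * outerSign i s b) := by
  rcases reflLabel_cases hs a with ⟨ha, h1, h2, h3⟩ | ⟨ha, h1, h2, h3⟩ | ⟨ha, h1, h2, h3⟩ |
    ⟨ha, h1, h2, h3⟩ | ⟨ha, h1, h2, h3⟩ | ⟨ha, ha', h1, h2, h3⟩ <;>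
  rcases reflLabel_cases hs b with ⟨hb, g1, g2, g3⟩ | ⟨hb, g1, g2, g3⟩ | ⟨hb, g1, g2, g3⟩ |
    ⟨hb, g1, g2, g3⟩ | ⟨hb, g1, g2, g3⟩ | ⟨hb, hb', g1, g2, g3⟩ <;>
  rw [h1, h2, h3, g1, g2, g3] <;> unfold nearInd <;> split_ifs <;> first | omega | norm_num

theorem IsLayering.refl {k i s : ℕ} {L : V → ℕ} (hL : IsLayering k L) (hik : 2 * i + 2 ≤ k) :
    IsLayering k (fun v => reflLabel i s (L v)) := by
  refine ⟨fun v => ?_, fun j hj => ?_⟩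
  · have := hL.1 v
    simp only [reflLabel]
    split_ifs <;> omega
  · obtain ⟨v, hv⟩ := hL.2 (reflLabel i s j) (by unfold reflLabel; split_ifs <;> omega)
    refine ⟨v, ?_⟩
    simp only [hv]
    unfold reflLabel
    split_ifs <;> omega

/-- Reflecting the labels in `[s, 2i+1-s]`, while keeping the values of the Perron vector, would
gain energy if the values just outside increase from left to right (or `s = 0`, when there is no
layer on the left) and the values at the ends do not. -/
theorem IsOptimal.no_refl {α : ℝ} (hα0 : 0 ≤ α) (hα1 : α < 1) {k i s : ℕ}
    {L : V → ℕ} {x : V → ℝ} (h : IsOptimal α k L x) (hik : 2 * i + 2 ≤ k) (hs : s + 1 ≤ i)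
    {r : ℕ → V} (hr : ∀ j ≤ k, j ≠ i → ∀ u, L u = j ↔ u = r j)
    (hin : x (r (2 * i + 1 - s)) ≤ x (r s))
    (hout : s = 0 ∨ x (r (s - 1)) < x (r (2 * i + 2 - s))) : False := by
  have hinner : ∀ F : V → ℝ, ∑ v, innerSign i s (L v) * F v =
      F (r (2 * i + 1 - s)) - F (r s) := by
    intro F
    have e : ∀ v, (L v + s = 2 * i + 1) = (L v = 2 * i + 1 - s) := fun v => propext (by omega)
    simp only [innerSign, sub_mul, ite_mul, one_mul, zero_mul, Finset.sum_sub_distrib, e]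
    rw [sum_layer (hr _ (by omega) (by omega)), sum_layer (hr _ (by omega) (by omega))]
  have houter : ∀ F : V → ℝ, ∑ v, outerSign i s (L v) * F v =
      (if s = 0 then 0 else F (r (s - 1))) - F (r (2 * i + 2 - s)) := by
    intro F
    have e : ∀ v, (L v + s = 2 * i + 2) = (L v = 2 * i + 2 - s) := fun v => propext (by omega)
    simp only [outerSign, sub_mul, ite_mul, one_mul, zero_mul, Finset.sum_sub_distrib, e]
    rw [sum_layer (hr _ (by omega) (by omega))]
    congr 1
    split_ifs with h0
    · simp [h0]
    · have e : ∀ v, (L v + 1 = s) = (L v = s - 1) := fun v => propext (by omega)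
      simp only [e]
      rw [sum_layer (hr _ (by omega) (by omega))]
  -- `d` is right minus left at the ends of the interval, `D` is left minus right just outside,
  -- and `ε` is the change of the degree of the right end.
  obtain ⟨d, hd⟩ : ∃ d, d = x (r (2 * i + 1 - s)) - x (r s) := ⟨_, rfl⟩
  obtain ⟨D, hD⟩ : ∃ D, D = ∑ v, outerSign i s (L v) * x v := ⟨_, rfl⟩
  obtain ⟨ε, hε⟩ : ∃ ε, ε = ∑ v, outerSign i s (L v) * (1 : ℝ) := ⟨_, rfl⟩
  have hd0 : d ≤ 0 := by rw [hd]; linarith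
  have hD0 : D < 0 := by
    rw [hD, houter]
    split_ifs with h0
    · linarith [h.pos (r (2 * i + 2 - s))]
    · linarith [hout.resolve_left h0]
  have hε0 : ε ≤ 0 := by
    rw [hε, houter (fun _ => 1)]
    split_ifs <;> norm_num
  have hrow : ∀ u, layRow α (fun v => reflLabel i s (L v)) x u = layRow α L x u +
      (outerSign i s (L u) * ((1 - α) * d) +
        innerSign i s (L u) * (α * x u * ε + (1 - α) * D)) := by
    intro u
    have e1 : d = ∑ v, innerSign i s (L v) * x v := by rw [hinner, hd]
    have e2 : (0 : ℝ) = ∑ v, innerSign i s (L v) * 1 := by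
      rw [hinner (fun _ => 1), sub_self]
    have e3 : outerSign i s (L u) * ((1 - α) * d) = outerSign i s (L u) *
        (α * x u * ∑ v, innerSign i s (L v) * 1 + (1 - α) * ∑ v, innerSign i s (L v) * x v) := by
      rw [← e1, ← e2]; ring
    rw [e3, hε, hD]
    simp only [layRow, nearInd_reflLabel hs, Finset.mul_sum, ← Finset.sum_add_distrib]
    refine Finset.sum_congr rfl fun v _ => ?_
    ring
  have hgain : ∑ u, x u * layRow α (fun v => reflLabel i s (L v)) x u =
      ∑ u, x u * layRow α L x u + (2 * ((1 - α) * (d * D)) +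
        α * ε * (x (r (2 * i + 1 - s)) ^ 2 - x (r s) ^ 2)) := by
    have e1 := hinner x
    have e2 := hinner (fun v => x v ^ 2)
    have : ∀ u, x u * layRow α (fun v => reflLabel i s (L v)) x u = x u * layRow α L x u +
        ((1 - α) * d * (outerSign i s (L u) * x u) +
          (α * ε * (innerSign i s (L u) * x u ^ 2) +
            (1 - α) * D * (innerSign i s (L u) * x u))) := fun u => by rw [hrow]; ring
    rw [Finset.sum_congr rfl fun u _ => this u, Finset.sum_add_distrib, Finset.sum_add_distrib,
      Finset.sum_add_distrib, ← Finset.mul_sum, ← Finset.mul_sum, ← Finset.mul_sum, e1, e2,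
      ← hD, ← hd]
    ring
  have hsq : x (r (2 * i + 1 - s)) ^ 2 ≤ x (r s) ^ 2 :=
    pow_le_pow_left₀ (h.pos _).le hin 2
  have hg0 : 0 ≤ 2 * ((1 - α) * (d * D)) +
      α * ε * (x (r (2 * i + 1 - s)) ^ 2 - x (r s) ^ 2) := by
    have h1 : 0 ≤ (1 - α) * (d * D) :=
      mul_nonneg (by linarith) (mul_nonneg_of_nonpos_of_nonpos hd0 hD0.le)
    have h2 : 0 ≤ α * ε * (x (r (2 * i + 1 - s)) ^ 2 - x (r s) ^ 2) :=
      mul_nonneg_of_nonpos_of_nonpos (mul_nonpos_of_nonneg_of_nonpos hα0 hε0) (by linarith)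
    linarith
  have hc := (h.compare (h.lay.refl (s := s) hik) x (by
    rw [← sum_mul_layRow, hgain, sum_mul_layRow, h.sum_kern]; linarith)).2 (r s)
  have hLs : L (r s) = s := (hr s (by omega) (by omega) (r s)).2 rfl
  have o0 : outerSign i s s = 0 := by
    rw [outerSign, if_neg (by omega), if_neg (by omega), sub_zero]
  have i0 : innerSign i s s = -1 := by
    rw [innerSign, if_neg (by omega), if_pos rfl, zero_sub]
  rw [hrow, h.eig, hLs, o0, i0] at hc
  have h1 : α * x (r s) * ε ≤ 0 :=
    mul_nonpos_of_nonneg_of_nonpos (mul_nonneg hα0 (h.pos _).le) hε0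
  have h2 : (1 - α) * D < 0 := mul_neg_of_pos_of_neg (by linarith) hD0
  linarith

/-- The large layer `i` of an optimal layering is not left of the centre. -/
theorem IsOptimal.not_left {α : ℝ} (hα0 : 0 ≤ α) (hα1 : α < 1) {k i : ℕ}
    {L : V → ℕ} {x : V → ℝ} (h : IsOptimal α k L x) {w w₂ : V} (hne : w ≠ w₂)
    (hw : L w = i) (hw₂ : L w₂ = i)
    (huniq : ∀ u v, L u = L v → L u ≠ i → u = v) : k < 2 * i + 2 := by
  classical
  by_contra hik
  rw [not_lt] at hik
  have hex : ∀ j, ∃ v, j ≤ k → L v = j := by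
    intro j
    by_cases hj : j ≤ k
    · obtain ⟨v, hv⟩ := h.lay.2 j hj
      exact ⟨v, fun _ => hv⟩
    · exact ⟨w, fun h => absurd h hj⟩
  choose r hr' using hex
  have hr : ∀ j ≤ k, j ≠ i → ∀ u, L u = j ↔ u = r j := by
    intro j hj hji u
    constructor
    · intro hu
      exact huniq u (r j) (by rw [hu, hr' j hj]) (by rwa [hu])
    · rintro rfl; exact hr' j hj
  by_cases hA : i = 0 ∨ x (r (i - 1)) < x (r (i + 2))
  · exact h.no_shift hα0 hα1 hne hw hw₂ (by omega) hr hA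
  · obtain ⟨hi0, hle⟩ := not_or.1 hA
    rw [not_lt] at hle
    -- Outermost pair of mirror layers whose values do not increase from left to right.
    have hP : ∃ s, x (r (2 * i + 1 - s)) ≤ x (r s) :=
      ⟨i - 1, by rwa [show 2 * i + 1 - (i - 1) = i + 2 by omega]⟩
    have hs : Nat.find hP ≤ i - 1 :=
      Nat.find_min' hP (by rwa [show 2 * i + 1 - (i - 1) = i + 2 by omega])
    refine h.no_refl hα0 hα1 hik (s := Nat.find hP) (by omega) hr (Nat.find_spec hP) ?_
    by_cases h0 : Nat.find hP = 0
    · exact Or.inl h0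
    · right
      have := Nat.find_min hP (m := Nat.find hP - 1) (by omega)
      rw [not_le] at this
      rwa [show 2 * i + 1 - (Nat.find hP - 1) = 2 * i + 2 - Nat.find hP by omega] at this

end Balance

/-! ### Identification with the bug graph -/

section Bug
variable {V : Type*} [Fintype V] [DecidableEq V]

theorem IsLayering.card_layer {k i : ℕ} {L : V → ℕ} (hL : IsLayering k L)
    (hu : ∀ u v, L u = L v → L u ≠ i → u = v) : ∀ j ≤ k, j ≠ i → #{u | L u = j} = 1 := by
  intro j hj hji
  obtain ⟨v, hv⟩ := hL.2 j hj
  rw [Finset.card_eq_one]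
  refine ⟨v, ?_⟩
  ext u
  simp only [Finset.mem_filter, Finset.mem_univ, true_and, Finset.mem_singleton]
  exact ⟨fun h => hu u v (by rw [h, hv]) (by rwa [h]), fun h => by rw [h, hv]⟩

/-- Layered graphs with the same large layer `i` and all other layers singletons are isomorphic. -/
theorem layered_iso {W : Type*} [Fintype W] [DecidableEq W] {k i : ℕ} {L : V → ℕ}
    {L' : W → ℕ} (hL : IsLayering k L) (hL' : IsLayering k L')
    (hu : ∀ u v, L u = L v → L u ≠ i → u = v) (hu' : ∀ u v, L' u = L' v → L' u ≠ i → u = v)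
    (hcard : Fintype.card V = Fintype.card W) : Nonempty (layered L ≃g layered L') := by
  have hone := hL.card_layer hu
  have hone' := hL'.card_layer hu'
  have e1 : Fintype.card V = ∑ j ∈ range (k + 1), #{u | L u = j} :=
    Finset.card_eq_sum_card_fiberwise fun v _ =>
      Finset.mem_coe.2 (Finset.mem_range.2 (Nat.lt_succ_of_le (hL.1 v)))
  have e2 : Fintype.card W = ∑ j ∈ range (k + 1), #{u | L' u = j} :=
    Finset.card_eq_sum_card_fiberwise fun v _ =>
      Finset.mem_coe.2 (Finset.mem_range.2 (Nat.lt_succ_of_le (hL'.1 v)))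
  have hfib : ∀ j, #{u | L u = j} = #{u | L' u = j} := by
    intro j
    by_cases hj : j ≤ k
    · by_cases hji : j = i
      · have hmem : i ∈ range (k + 1) := Finset.mem_range.2 (by omega)
        rw [hcard, e2, ← Finset.add_sum_erase _ _ hmem, ← Finset.add_sum_erase _ _ hmem] at e1
        have : ∑ j ∈ (range (k + 1)).erase i, #{u | L u = j} =
            ∑ j ∈ (range (k + 1)).erase i, #{u | L' u = j} := by
          refine Finset.sum_congr rfl fun j hj => ?_
          have h1 := Finset.mem_erase.1 hj
          have h2 := Finset.mem_range.1 h1.2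
          rw [hone j (by omega) h1.1, hone' j (by omega) h1.1]
        rw [hji]
        omega
      · rw [hone j hj hji, hone' j hj hji]
    · rw [Finset.filter_false_of_mem, Finset.filter_false_of_mem]
      · rfl
      · intro v _ h
        exact hj (h ▸ hL'.1 v)
      · intro v _ h
        exact hj (h ▸ hL.1 v)
  have hequiv : ∀ j, Nonempty ({u // L u = j} ≃ {u // L' u = j}) := fun j =>
    ⟨Fintype.equivOfCardEq (by rw [Fintype.card_subtype, Fintype.card_subtype]; exact hfib j)⟩
  let e : V ≃ W := Equiv.ofFiberEquiv fun j => (hequiv j).some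
  have he : ∀ u, L' (e u) = L u := fun u => Equiv.ofFiberEquiv_map _ u
  refine ⟨⟨e, ?_⟩⟩
  intro u v
  simp [layered, he]

/-- Distance layers of the bug graph, counted from the end of its first path: the middle layer
`q` consists of the clique vertices other than the two roots. -/
def bugLabel (p q t : ℕ) : ℕ := if t < q then t else if t + 3 ≤ q + p then q else t + 3 - p

theorem bugGraph_eq_layered {p q r : ℕ} (hp : 3 ≤ p) (hq : 1 ≤ q) :
    bugGraph p q r = layered (fun t : Fin (p + q + r - 2) => bugLabel p q t.val) := by
  ext a b
  simp only [bugGraph, SimpleGraph.fromRel_adj, layered, bugLabel, ne_eq, Fin.ext_iff]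
  split_ifs <;> omega

theorem bugLabel_isLayering {p q r : ℕ} (hp : 3 ≤ p) (hq : 1 ≤ q) (hr : 1 ≤ r) :
    IsLayering (q + r) (fun t : Fin (p + q + r - 2) => bugLabel p q t.val) := by
  refine ⟨fun t => ?_, fun j hj => ?_⟩
  · have := t.2
    simp only [bugLabel]
    split_ifs <;> omega
  · by_cases h : j ≤ q
    · refine ⟨⟨j, by omega⟩, ?_⟩
      simp only [bugLabel]
      split_ifs <;> omega
    · refine ⟨⟨j + p - 3, by omega⟩, ?_⟩
      simp only [bugLabel]
      split_ifs <;> omega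

theorem IsOptimal.reverse {α : ℝ} {k : ℕ} {L : V → ℕ} {x : V → ℝ} (h : IsOptimal α k L x) :
    layered (fun v => k - L v) = layered L ∧ IsOptimal α k (fun v => k - L v) x := by
  have hgr : layered (fun v => k - L v) = layered L := by
    ext u v
    have h1 := h.lay.1 u
    have h2 := h.lay.1 v
    simp only [layered]
    refine and_congr_right fun _ => ?_
    omega
  refine ⟨hgr, ⟨fun v => Nat.sub_le _ _, fun j hj => ?_⟩, ?_, h.pos, fun u => ?_⟩
  · obtain ⟨v, hv⟩ := h.lay.2 (k - j) (Nat.sub_le _ _)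
    exact ⟨v, by simp only [hv]; omega⟩
  · rw [hgr]; exact h.max
  · rw [hgr, ← h.eig u]
    refine Finset.sum_congr rfl fun v _ => ?_
    have h1 := h.lay.1 u
    have h2 := h.lay.1 v
    have : nearInd (k - L u) (k - L v) = nearInd (L u) (L v) := by
      simp only [nearInd]
      congr 1
      apply propext
      omega
    rw [this]

theorem IsOptimal.exists_central {α : ℝ} (hα0 : 0 ≤ α) (hα1 : α < 1) {k : ℕ} (hk : 2 ≤ k)
    {L : V → ℕ} {x : V → ℝ} (h : IsOptimal α k L x) :
    ∃ L' : V → ℕ, layered L' = layered L ∧ IsLayering k L' ∧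
      ∀ u v, L' u = L' v → L' u ≠ k / 2 → u = v := by
  by_cases hinj : ∀ u v, L u = L v → u = v
  · exact ⟨L, rfl, h.lay, fun u v huv _ => hinj u v huv⟩
  · push Not at hinj
    obtain ⟨w, w₂, hw, hne⟩ := hinj
    have huniq : ∀ u v, L u = L v → L u ≠ L w → u = v := by
      intro u v huv hu
      by_contra hn
      exact hu (h.no_two_fat hα0 hα1 hk hn huv hne hw)
    have h1 := h.not_left hα0 hα1 hne rfl hw.symm huniq
    obtain ⟨hgr, hrev⟩ := h.reverse
    have hle := h.lay.1
    have huniq' : ∀ u v, k - L u = k - L v → k - L u ≠ k - L w → u = v := by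
      intro u v huv hu
      have := hle u
      have := hle v
      exact huniq u v (by omega) (by omega)
    have h2 := hrev.not_left hα0 hα1 hne rfl (by simp only [hw]) huniq'
    have := hle w
    by_cases hc : L w = k / 2
    · exact ⟨L, rfl, h.lay, fun u v huv hu => huniq u v huv (by rwa [hc])⟩
    · refine ⟨_, hgr, hrev.lay, fun u v huv hu => huniq' u v huv ?_⟩
      have : k - L w = k / 2 := by omega
      rwa [this]

theorem IsOptimal.iso_bug {α : ℝ} (hα0 : 0 ≤ α) (hα1 : α < 1) {k : ℕ} (hk : 2 ≤ k)
    (hn : k + 1 ≤ Fintype.card V) {L : V → ℕ} {x : V → ℝ} (h : IsOptimal α k L x) :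
    Nonempty (layered L ≃g bugGraph (Fintype.card V - k + 2) (k / 2) ((k + 1) / 2)) := by
  obtain ⟨L', hgr, hL', hu⟩ := h.exists_central hα0 hα1 hk
  rw [← hgr, bugGraph_eq_layered (by omega) (by omega)]
  have hB := bugLabel_isLayering (p := Fintype.card V - k + 2) (q := k / 2)
    (r := (k + 1) / 2) (by omega) (by omega) (by omega)
  rw [show k / 2 + (k + 1) / 2 = k by omega] at hB
  refine layered_iso (i := k / 2) hL' hB hu ?_ ?_
  · intro u v huv hne
    ext
    simp only [bugLabel] at huv hne
    split_ifs at huv hne <;> omega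
  · rw [Fintype.card_fin]; omega

end Bug

/-! ### Distance layers -/

section Distance
variable {V : Type*} [Fintype V] [DecidableEq V]

theorem exists_dist_eq_of_le {G : SimpleGraph V} (hG : G.Connected) (u v : V) {j : ℕ}
    (hj : j ≤ G.dist u v) : ∃ w, G.dist u w = j := by
  obtain ⟨p, hp⟩ := hG.exists_walk_length_eq_dist u v
  refine ⟨p.getVert j, le_antisymm ?_ ?_⟩
  · have := SimpleGraph.dist_le (p.take j)
    rw [SimpleGraph.Walk.take_length] at this
    omega
  · have h1 := SimpleGraph.dist_le (p.drop j)
    rw [SimpleGraph.Walk.drop_length] at h1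
    have h2 := hG.dist_triangle (u := u) (v := p.getVert j) (w := v)
    omega

/-- A connected graph of diameter at least `k` is a spanning subgraph of a layered graph with
`k + 1` layers: truncate the distance from the end of a diametral path at `k`. -/
theorem exists_layering {G : SimpleGraph V} (hG : G.Connected) {k : ℕ} (hk : k ≤ G.diam) :
    ∃ L : V → ℕ, IsLayering k L ∧ G ≤ layered L := by
  have := hG.nonempty
  obtain ⟨u, v, huv⟩ := G.exists_dist_eq_diam
  refine ⟨fun w => min (G.dist u w) k, ⟨fun w => min_le_right _ _, fun j hj => ?_⟩, ?_⟩
  · obtain ⟨w, hw⟩ := exists_dist_eq_of_le hG u v (j := j) (by omega)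
    exact ⟨w, by simp only [hw]; omega⟩
  · intro a b hab
    refine ⟨hab.ne, ?_⟩
    have := hab.diff_dist_adj (u := u)
    simp only
    omega

theorem IsLayering.card_le {k : ℕ} {L : V → ℕ} (hL : IsLayering k L) :
    k + 1 ≤ Fintype.card V := by
  have : range (k + 1) ⊆ univ.image L := by
    intro j hj
    obtain ⟨v, hv⟩ := hL.2 j (Nat.lt_succ_iff.1 (Finset.mem_range.1 hj))
    exact Finset.mem_image.2 ⟨v, Finset.mem_univ _, hv⟩
  have := (Finset.card_le_card this).trans Finset.card_image_le
  simpa using this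

end Distance

/-- Let `α ∈ [0,1)` and let `G` be a graph of order `n` with
diameter at least `k`, where `k ≥ 2`. Then
`ρ_α(G) ≤ ρ_α(B_{n−k+2, ⌊k/2⌋, ⌈k/2⌉})`, with equality if and only if `G` is
isomorphic to `B_{n−k+2, ⌊k/2⌋, ⌈k/2⌉}`. -/
theorem alphaIndex_le_of_diam {n k : ℕ} (α : ℝ) (hα0 : 0 ≤ α) (hα1 : α < 1)
    {V : Type*} [Fintype V] [DecidableEq V] (G : SimpleGraph V)
    (hcard : Fintype.card V = n) (hk : 2 ≤ k)
    (hconn : G.Connected) (hdiam : k ≤ G.diam) :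
    rhoAlpha α G ≤ rhoAlpha α (bugGraph (n - k + 2) (k / 2) ((k + 1) / 2)) ∧
      (rhoAlpha α G = rhoAlpha α (bugGraph (n - k + 2) (k / 2) ((k + 1) / 2)) ↔
        Nonempty (G ≃g bugGraph (n - k + 2) (k / 2) ((k + 1) / 2))) := by
  subst hcard
  obtain ⟨L, hL, hGL⟩ := exists_layering hconn hdiam
  obtain ⟨L₀, hL₀, hmax⟩ := exists_max_layering α hL
  have hn := hL.card_le
  obtain ⟨x₀, hopt⟩ := exists_isOptimal hα0 hα1 hL₀ hmax
  obtain ⟨e₀⟩ := hopt.iso_bug hα0 hα1 hk hn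
  rw [← rhoAlpha_congr α e₀]
  have hmono := rhoAlpha_mono hα0 hα1 hconn hGL
  refine ⟨hmono.1.trans (hmax L hL), fun heq => ?_, fun ⟨e⟩ => ?_⟩
  · have hLL : rhoAlpha α (layered L) = rhoAlpha α (layered L₀) :=
      le_antisymm (hmax L hL) (heq ▸ hmono.1)
    obtain ⟨x, hx⟩ := exists_isOptimal hα0 hα1 hL (by rw [hLL]; exact hmax)
    rw [hmono.2 (heq.trans hLL.symm)]
    exact hx.iso_bug hα0 hα1 hk hn
  · rw [rhoAlpha_congr α e, rhoAlpha_congr α e₀]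
end

section
/- Let α ∈ [0,1) and let G be a graph of order n. Suppose u, v ∈ V(G) and S ⊆ V(G) satisfy: u, v ∉ S, u ≠ v, and for every w ∈ S, {u,w} is an edge of G and {v,w} is not an edge of G. Let H be the graph obtained from G by deleting the edges {u,w} and adding the edges {v,w} for all w ∈ S. If S is nonempty and there is an eigenvector (x_1,…,x_n) of A_α(G) with eigenvalue ρ_α(G) all of whose entries are positive and which satisfies x_v ≥ x_u, then ρ_α(H) > ρ_α(G). -/
open Matrix

lemma bddAbove_eigenvalues {m : Type*} [Fintype m] (M : Matrix m m ℝ) :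
    BddAbove {t : ℝ | ∃ v : m → ℝ, v ≠ 0 ∧ M.mulVec v = t • v} := by
  classical
  refine ((Module.End.finite_hasEigenvalue (Matrix.toLin' M)).subset ?_).bddAbove
  rintro t ⟨v, hv, h⟩
  exact Module.End.hasEigenvalue_of_hasEigenvector
    (x := v) ⟨Module.End.mem_eigenspace_iff.2 (by simpa using h), hv⟩

/-- Every eigenvalue of `specRad M • 1 - M` has the form `specRad M - t` with `t` an eigenvalue
of `M`, hence is nonnegative. -/
lemma posSemidef_specRad_sub {m : Type*} [Fintype m] [DecidableEq m] (M : Matrix m m ℝ)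
    (hM : M.IsHermitian) : (specRad M • (1 : Matrix m m ℝ) - M).PosSemidef := by
  have hN : (specRad M • (1 : Matrix m m ℝ) - M).IsHermitian := by
    apply Matrix.IsHermitian.sub _ hM
    simp [Matrix.IsHermitian]
  rw [hN.posSemidef_iff_eigenvalues_nonneg]
  intro i
  have h := hN.mulVec_eigenvectorBasis i
  have hne : (hN.eigenvectorBasis i).ofLp ≠ 0 := by
    intro h0
    exact hN.eigenvectorBasis.toBasis.ne_zero i (by ext j; simpa using congrFun h0 j)
  have hle : specRad M - hN.eigenvalues i ≤ specRad M := by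
    refine le_csSup (bddAbove_eigenvalues M) ⟨_, hne, ?_⟩
    rw [Matrix.sub_mulVec, Matrix.smul_mulVec, Matrix.one_mulVec] at h
    rw [sub_smul, ← h]
    abel
  simp only [Pi.zero_apply]
  linarith

lemma isHermitian_Aalpha {V : Type*} [Fintype V] [DecidableEq V] (α : ℝ) (G : SimpleGraph V) :
    (Aalpha α G).IsHermitian := by
  classical
  ext i j
  by_cases h : i = j
  · subst h; simp [Aalpha]
  · simp [Aalpha, Matrix.diagonal, h, Ne.symm h, G.adj_comm]

open Classical in
lemma Aalpha_mulVec_apply {V : Type*} [Fintype V] [DecidableEq V] (α : ℝ) (G : SimpleGraph V)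
    (x : V → ℝ) (i : V) :
    (Aalpha α G).mulVec x i = ∑ j, if G.Adj i j then α * x i + (1 - α) * x j else 0 := by
  rw [← Finset.sum_filter, Finset.sum_add_distrib, Finset.sum_const, ← Finset.mul_sum]
  simp only [Aalpha, Matrix.add_mulVec, Matrix.smul_mulVec, Pi.add_apply, Pi.smul_apply,
    Matrix.mulVec_diagonal, SimpleGraph.adjMatrix_mulVec_apply, smul_eq_mul,
    nsmul_eq_mul, SimpleGraph.neighborFinset_eq_filter, ← SimpleGraph.card_neighborFinset_eq_degree]
  rw [mul_left_comm]

/-- edge-rotation lemma. Let `α ∈ [0,1)` and let `G` be a graph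
of order `n`. Suppose `u ≠ v`, `u, v ∉ S`, and for every `w ∈ S`, `{u,w}` is an
edge of `G` and `{v,w}` is not. Let `H` be obtained from `G` by deleting the
edges `{u,w}` and adding the edges `{v,w}` for all `w ∈ S`. If `S` is nonempty
and there is a positive eigenvector `x` of `A_α(G)` with eigenvalue `ρ_α(G)`
such that `x v ≥ x u`, then `ρ_α(H) > ρ_α(G)`. -/
theorem alphaIndex_lt_of_rotation {n : ℕ} (α : ℝ) (hα0 : 0 ≤ α) (hα1 : α < 1)
    (G H : SimpleGraph (Fin n)) (u v : Fin n) (S : Finset (Fin n))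
    (huS : u ∉ S) (hvS : v ∉ S) (huv : u ≠ v)
    (hS : ∀ w ∈ S, G.Adj u w ∧ ¬ G.Adj v w)
    (hH : ∀ a b, H.Adj a b ↔
      ((G.Adj a b ∧ ¬(a = u ∧ b ∈ S) ∧ ¬(b = u ∧ a ∈ S)) ∨
        (a = v ∧ b ∈ S) ∨ (b = v ∧ a ∈ S)))
    (hSne : S.Nonempty)
    (x : Fin n → ℝ) (hx : ∀ i, 0 < x i)
    (heig : (Aalpha α G).mulVec x = rhoAlpha α G • x)
    (hxvu : x u ≤ x v) :
    rhoAlpha α G < rhoAlpha α H := by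
  classical
  set d : Fin n → ℝ := fun i => (Aalpha α H).mulVec x i - (Aalpha α G).mulVec x i with hd
  have hβ : 0 < 1 - α := by linarith
  have hd_apply : ∀ i, d i = ∑ j, ((if H.Adj i j then α * x i + (1 - α) * x j else 0)
      - (if G.Adj i j then α * x i + (1 - α) * x j else 0)) := by
    intro i
    simp only [hd]
    rw [Aalpha_mulVec_apply, Aalpha_mulVec_apply, Finset.sum_sub_distrib]
  have hdu : d u = - ∑ w ∈ S, (α * x u + (1 - α) * x w) := by
    rw [hd_apply, ← Finset.sum_neg_distrib, ← Fintype.sum_ite_mem S]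
    refine Finset.sum_congr rfl fun j _ => ?_
    have := hH u j
    by_cases hj : j ∈ S
    · have := hS j hj
      simp_all
    · simp_all
  have hdv : d v = ∑ w ∈ S, (α * x v + (1 - α) * x w) := by
    rw [hd_apply, ← Fintype.sum_ite_mem S]
    refine Finset.sum_congr rfl fun j _ => ?_
    have := hH v j
    by_cases hj : j ∈ S
    · have := hS j hj
      simp_all
    · have : H.Adj v j ↔ G.Adj v j := by grind
      simp [hj, this]
  have hdi : ∀ i, i ≠ u → i ≠ v → 0 ≤ d i := by
    intro i hiu hiv
    rw [hd_apply]
    by_cases hi : i ∈ S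
    -- row `i` loses its entry at `u` and gains one at `v`
    · have hterm : ∀ j, ((if H.Adj i j then α * x i + (1 - α) * x j else 0)
          - (if G.Adj i j then α * x i + (1 - α) * x j else 0))
          = (if j = v then α * x i + (1 - α) * x j else 0)
            - (if j = u then α * x i + (1 - α) * x j else 0) := by
        intro j
        have h1 := hH i j
        have h2 := hS i hi
        have h3 := G.adj_comm i j
        by_cases hjv : j = v
        · grind
        · grind
      rw [Finset.sum_congr rfl fun j _ => hterm j, Finset.sum_sub_distrib]
      simp only [Finset.sum_ite_eq', Finset.mem_univ, if_true]
      nlinarith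
    · refine Finset.sum_nonneg fun j _ => ?_
      have : H.Adj i j ↔ G.Adj i j := by
        rw [hH]; tauto
      simp [this]
  have hdu_neg : d u < 0 := by
    rw [hdu, neg_lt_zero]
    refine Finset.sum_pos (fun w _ => ?_) hSne
    have := mul_pos hβ (hx w)
    have := mul_nonneg hα0 (hx u).le
    linarith
  have hduv : 0 ≤ d u + d v := by
    rw [hdu, hdv, neg_add_eq_sub, ← Finset.sum_sub_distrib]
    refine Finset.sum_nonneg fun w _ => ?_
    nlinarith
  have hquad : 0 ≤ x ⬝ᵥ d := by
    have hrest : x u * d u + x v * d v ≤ x ⬝ᵥ d := by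
      rw [← Finset.sum_pair huv (f := fun i => x i * d i)]
      refine Finset.sum_le_sum_of_subset_of_nonneg (Finset.subset_univ _) fun i _ hi => ?_
      simp only [Finset.mem_insert, Finset.mem_singleton, not_or] at hi
      exact mul_nonneg (hx i).le (hdi i hi.1 hi.2)
    nlinarith [mul_nonneg (hx u).le hduv]
  by_contra! hle
  have hxx : 0 < x ⬝ᵥ x :=
    Finset.sum_pos (fun i _ => mul_pos (hx i) (hx i)) ⟨u, Finset.mem_univ u⟩
  have hHx : (Aalpha α H).mulVec x = rhoAlpha α G • x + d := by
    rw [← heig]; ext i; simp [hd]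
  have hpsd := posSemidef_specRad_sub (Aalpha α H) (isHermitian_Aalpha α H)
  have hform : (specRad (Aalpha α H) • (1 : Matrix (Fin n) (Fin n) ℝ) - Aalpha α H).mulVec x
      = (rhoAlpha α H - rhoAlpha α G) • x - d := by
    rw [Matrix.sub_mulVec, Matrix.smul_mulVec, Matrix.one_mulVec, hHx, sub_smul, rhoAlpha.eq_def α H]
    abel
  have hval : x ⬝ᵥ ((rhoAlpha α H - rhoAlpha α G) • x - d)
      = (rhoAlpha α H - rhoAlpha α G) * (x ⬝ᵥ x) - x ⬝ᵥ d := by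
    rw [dotProduct_sub, dotProduct_smul, smul_eq_mul]
  have hnonneg := hpsd.dotProduct_mulVec_nonneg x
  rw [star_trivial, hform, hval] at hnonneg
  have hρ : rhoAlpha α H - rhoAlpha α G = 0 := by
    by_contra hne
    have hlt : rhoAlpha α H - rhoAlpha α G < 0 := lt_of_le_of_ne (by linarith) hne
    nlinarith [mul_neg_of_neg_of_pos hlt hxx]
  have hker := (hpsd.dotProduct_mulVec_zero_iff x).1 (by
    rw [star_trivial, hform, hval, hρ]
    rw [hρ] at hnonneg
    linarith)
  rw [hform, hρ] at hker
  have := congrFun hker u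
  simp at this
  linarith
end
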